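/- Let X be any subset of the full blur shift Σ, with the subspace topology. If X is sequentially compact, then for every finite word α over A (including the empty word) belonging to B(X), the sets V_α := {H ∈ V : the symbol H̃ belongs to F_X(α)} and W_α := (F_X(α) ∩ A) ∖ ⋃_{H ∈ V_α} H are finite. Conversely, if X is closed in Σ and for every such α both V_α and W_α are finite, then X is sequentially compact. -/

import Mathlib

open Set Filter Topology

namespace BlurPaper

/-- The extended alphabet `Ā = A ⊕ V`, where each blurred set `H ∈ V` is regarded
as a new symbol `H̃`. -/
abbrev Symb (A : Type*) (V : Set (Set A)) := A ⊕ {H : Set A // H ∈ V}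

/-- `V` is a family of blurred sets: every member is infinite and two distinct members
have finite intersection. -/
def IsBlurFamily {A : Type*} (V : Set (Set A)) : Prop :=
  (∀ H ∈ V, H.Infinite) ∧ ∀ G ∈ V, ∀ H ∈ V, G ≠ H → (G ∩ H).Finite

/-- The full blur shift `Σ`: sequences over `Ā` such that a blur symbol is followed
by the same blur symbol. -/
def FullBlur (A : Type*) (V : Set (Set A)) : Set (ℕ → Symb A V) :=
  {x | ∀ (i : ℕ) (H : {H : Set A // H ∈ V}), x i = Sum.inr H → x (i + 1) = Sum.inr H}

/-- Generalized cylinder `Z(α)`. -/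
def Z (A : Type*) (V : Set (Set A)) (α : List A) : Set (FullBlur A V) :=
  {x | ∀ i : Fin α.length, x.1 i = Sum.inl (α.get i)}

/-- Generalized cylinder `Z(α, H, F)`. -/
def ZH (A : Type*) (V : Set (Set A)) (α : List A) (H : {H : Set A // H ∈ V})
    (F : Set A) : Set (FullBlur A V) :=
  {x | (∀ i : Fin α.length, x.1 i = Sum.inl (α.get i)) ∧
    (x.1 α.length = Sum.inr H ∨ ∃ a ∈ H.1 \ F, x.1 α.length = Sum.inl a)}

/-- The collection of all generalized cylinders. -/
def Cylinders (A : Type*) (V : Set (Set A)) : Set (Set (FullBlur A V)) :=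
  {U | ∃ α : List A, U = Z A V α} ∪
  {U | ∃ (α : List A) (H : {H : Set A // H ∈ V}) (F : Set A),
    F ⊆ H.1 ∧ F.Finite ∧ U = ZH A V α H F}

/-- The topology on the full blur shift generated by the generalized cylinders. -/
def tau (A : Type*) (V : Set (Set A)) : TopologicalSpace (FullBlur A V) :=
  TopologicalSpace.generateFrom (Cylinders A V)

/-- The shift map on the full blur shift. -/
def shift (A : Type*) (V : Set (Set A)) : FullBlur A V → FullBlur A V :=
  fun x => ⟨fun i => x.1 (i + 1), fun i H h => x.2 (i + 1) H h⟩

/-- The shift map on `A^ℕ`. -/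
def shiftSeq (A : Type*) : (ℕ → A) → ℕ → A := fun x i => x (i + 1)

/-- The prodiscrete topology on `A^ℕ` (product of discrete topologies). -/
def prodDiscrete (A : Type*) : TopologicalSpace (ℕ → A) :=
  @Pi.topologicalSpace ℕ (fun _ => A) fun _ => ⊥

/-- A (classical) shift space over `A`: closed in the prodiscrete topology and
invariant under the shift map. -/
def IsShiftSpace {A : Type*} (Λ : Set (ℕ → A)) : Prop :=
  @IsClosed _ (prodDiscrete A) Λ ∧ ∀ x ∈ Λ, shiftSeq A x ∈ Λ

/-- `w ∈ B(Y)`: the finite word `w` appears as an initial word of some element of `Y`. -/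
def InLang {A : Type*} (Y : Set (ℕ → A)) (w : List A) : Prop :=
  ∃ x ∈ Y, ∀ i : Fin w.length, x i = w.get i

/-- The follower set `F_Y(w) = {a : w a ∈ B(Y)}`. -/
def Fol {A : Type*} (Y : Set (ℕ → A)) (w : List A) : Set A :=
  {a | InLang Y (w ++ [a])}

/-- The predecessor set `P_Y(a) = {b : b a ∈ B(Y)}`. -/
def Pred {A : Type*} (Y : Set (ℕ → A)) (a : A) : Set A :=
  {b | InLang Y [b, a]}

/-- `B₁(Y)`: the set of letters occurring in sequences of `Y`. -/
def letters {A : Type*} (Y : Set (ℕ → A)) : Set A :=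
  {a | ∃ x ∈ Y, ∃ i, x i = a}

/-- The canonical embedding `A^ℕ → Σ`. -/
def embed (A : Type*) (V : Set (Set A)) : (ℕ → A) → FullBlur A V :=
  fun x => ⟨fun i => Sum.inl (x i), fun _ _ h => absurd h (by simp)⟩

/-- The point `(a₀ … a_{n-1} H̃ H̃ H̃ …)` of the full blur shift. -/
def wordBlur {A : Type*} {V : Set (Set A)} (α : List A) (H : {H : Set A // H ∈ V}) :
    FullBlur A V :=
  ⟨fun i => if h : i < α.length then Sum.inl (α.get ⟨i, h⟩) else Sum.inr H, by
    intro i K hK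
    by_cases h : i < α.length
    · simp only [dif_pos h] at hK
      exact absurd hK (by simp)
    · simp only [dif_neg h] at hK
      simp only [dif_neg (by omega : ¬ i + 1 < α.length)]
      exact hK⟩

/-- The boundary `∂Y`: points `(a₀ … a_{n-1} H̃ H̃ …)` with `a₀ … a_{n-1} ∈ B(Y)` and
`F_Y(a₀ … a_{n-1}) ∩ H` infinite. -/
def boundary (A : Type*) (V : Set (Set A)) (Y : Set (ℕ → A)) : Set (FullBlur A V) :=
  {z | ∃ (α : List A) (H : {H : Set A // H ∈ V}),
    z = wordBlur α H ∧ InLang Y α ∧ (Fol Y α ∩ H.1).Infinite}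

/-- The blur shift space `Σ_Y = Y ∪ ∂Y` of `Y` with resolution `V`. -/
def SigmaOf (A : Type*) (V : Set (Set A)) (Y : Set (ℕ → A)) : Set (FullBlur A V) :=
  embed A V '' Y ∪ boundary A V Y

/-- The subspace topology inherited from the full blur shift. -/
def subTau (A : Type*) (V : Set (Set A)) (X : Set (FullBlur A V)) :
    TopologicalSpace X :=
  TopologicalSpace.induced Subtype.val (tau A V)

/-- `V_Λ`: the blurred sets that appear in `Σ_Λ`, i.e. those meeting `B₁(Λ)` in an
infinite set. -/
def VLam (A : Type*) (V : Set (Set A)) (Λ : Set (ℕ → A)) : Set (Set A) :=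
  {H | H ∈ V ∧ (letters Λ ∩ H).Infinite}


/-- `w ∈ B(X)` for a subset `X` of the full blur shift: the word `w` over `Ā`
appears as an initial word of some element of `X`. -/
def InLangS {A : Type*} {V : Set (Set A)} (X : Set (FullBlur A V))
    (w : List (Symb A V)) : Prop :=
  ∃ x ∈ X, ∀ i : Fin w.length, x.1 i = w.get i

/-- The follower set of a word `w` in a subset `X` of the full blur shift. -/
def FolS {A : Type*} {V : Set (Set A)} (X : Set (FullBlur A V))
    (w : List (Symb A V)) : Set (Symb A V) :=
  {b | InLangS X (w ++ [b])}

/-- `V_α`: the blurred sets `H` whose symbol `H̃` belongs to `F_X(α)`. -/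
def Valpha {A : Type*} (V : Set (Set A)) (X : Set (FullBlur A V)) (α : List A) :
    Set {H : Set A // H ∈ V} :=
  {H | Sum.inr H ∈ FolS X (α.map Sum.inl)}

/-- `W_α`: the letters of `A` in `F_X(α)` not covered by `⋃_{H ∈ V_α} H`. -/
def Walpha {A : Type*} (V : Set (Set A)) (X : Set (FullBlur A V)) (α : List A) :
    Set A :=
  {a | Sum.inl a ∈ FolS X (α.map Sum.inl)} \ ⋃ H ∈ Valpha V X α, H.1

/-!
Give the extended alphabet `Ā` the topology in which letters are isolated and the neighbourhoods of
`H̃` are the sets containing `H̃` and cofinitely many letters of `H`. With `n = |α|`, the cylinder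
`Z(α)` is clopen, `x ↦ xₙ` is continuous on it, and it maps `X ∩ Z(α)` onto `F_X(α)`. Hence
sequential compactness passes from `X` to every `F_X(α)`. Conversely, given a sequence in `X`, one
extends a word that is a prefix of infinitely many of its terms: by sequential compactness of the
follower set, either some letter can be appended, or a subsequence converges to a point
`α H̃ H̃ …`. If the extension never stops, a diagonal subsequence converges to the infinite word
built.

It remains to see that a set `S` of symbols is sequentially compact exactly when it has finitely
many blur symbols and only finitely many letters outside the corresponding blurred sets: these two
subsets of `S` have no accumulation point in `S`, and a sequence in `S` that repeats no symbol
infinitely often visits one of finitely many blurred sets infinitely often, thus subconverges to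
the blur symbol.
-/

theorem exists_seq_forall_map_range {B : Type*} {p : List B → Prop} (hnil : p [])
    (happend : ∀ w, p w → ∃ b, p (w ++ [b])) : ∃ b : ℕ → B, ∀ n, p ((List.range n).map b) := by
  choose next hnext using happend
  let word : ℕ → {w // p w} :=
    Nat.rec ⟨[], hnil⟩ fun _ w => ⟨w.1 ++ [next w.1 w.2], hnext w.1 w.2⟩
  refine ⟨fun n => next (word n).1 (word n).2, fun n => ?_⟩
  suffices h : (List.range n).map (fun n => next (word n).1 (word n).2) = (word n).1 from
    h ▸ (word n).2
  induction n with
  | zero => rfl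
  | succ n ih => rw [List.range_succ, List.map_append, ih, List.map_singleton]

section SymbolTopology

variable {A : Type*} {V : Set (Set A)}

/-- The topology on the extended alphabet in which letters are isolated and a set is a
neighbourhood of `H̃` when it contains `H̃` and all but finitely many letters of `H`. It makes the
coordinate following the prefix `α` continuous on `Z(α)`. -/
abbrev symbTopology (A : Type*) (V : Set (Set A)) : TopologicalSpace (Symb A V) where
  IsOpen U := ∀ H, Sum.inr H ∈ U → (H.1 \ Sum.inl ⁻¹' U).Finite
  isOpen_univ := by simp
  isOpen_inter U U' hU hU' H hH := by
    rw [preimage_inter, sdiff_inter]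
    exact (hU H hH.1).union (hU' H hH.2)
  isOpen_sUnion 𝒰 h𝒰 H := by
    rintro ⟨U, hU, hH⟩
    exact (h𝒰 U hU H hH).subset (sdiff_subset_sdiff_right (preimage_mono (subset_sUnion_of_mem hU)))

attribute [local instance] symbTopology

/-- The basic neighbourhood `{H̃} ∪ (H ∖ F)` of the symbol `H̃`. -/
def blurNhd (H : {H : Set A // H ∈ V}) (F : Set A) : Set (Symb A V) :=
  insert (Sum.inr H) (Sum.inl '' (H.1 \ F))

theorem inl_mem_blurNhd {H : {H : Set A // H ∈ V}} {F : Set A} {a : A} :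
    (Sum.inl a : Symb A V) ∈ blurNhd H F ↔ a ∈ H.1 \ F := by
  simp [blurNhd]

theorem inr_mem_blurNhd {H K : {H : Set A // H ∈ V}} {F : Set A} :
    (Sum.inr K : Symb A V) ∈ blurNhd H F ↔ K = H := by
  simp [blurNhd]

theorem isOpen_blurNhd (H : {H : Set A // H ∈ V}) {F : Set A} (hF : F.Finite) :
    IsOpen (blurNhd H F) := by
  intro K hK
  obtain rfl := inr_mem_blurNhd.1 hK
  refine hF.subset fun a ha => ?_
  by_contra haF
  exact ha.2 (inl_mem_blurNhd.2 ⟨ha.1, haF⟩)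

theorem hasBasis_nhds_inr (H : {H : Set A // H ∈ V}) :
    (𝓝 (Sum.inr H : Symb A V)).HasBasis (fun F => F ⊆ H.1 ∧ F.Finite) (blurNhd H) := by
  refine ⟨fun U => ⟨fun hU => ?_, fun ⟨F, ⟨_, hF⟩, hFU⟩ => ?_⟩⟩
  · obtain ⟨U', hU'U, hU', hH⟩ := mem_nhds_iff.1 hU
    refine ⟨H.1 \ Sum.inl ⁻¹' U', ⟨sdiff_subset, hU' H hH⟩, ?_⟩
    rintro _ (rfl | ⟨a, ⟨haH, ha⟩, rfl⟩)
    · exact hU'U hH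
    · exact hU'U (by_contra fun haU => ha ⟨haH, haU⟩)
  · exact mem_of_superset ((isOpen_blurNhd H hF).mem_nhds (inr_mem_blurNhd.2 rfl)) hFU

theorem nhds_inl (a : A) : 𝓝 (Sum.inl a : Symb A V) = pure (Sum.inl a) :=
  (isOpen_singleton_iff_nhds_eq_pure _).1 fun _ hH => by simp at hH

theorem isClosed_singleton_inl (a : A) : IsClosed {(Sum.inl a : Symb A V)} := by
  refine ⟨fun H _ => (finite_singleton a).subset fun b hb => ?_⟩
  simpa using hb.2

theorem tendsto_nhds_inr_of_cofinite {ι : Type*} {l : Filter ι} {s : ι → Symb A V}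
    {H : {H : Set A // H ∈ V}} (hs : Tendsto s l cofinite) (hH : ∀ᶠ k in l, s k ∈ blurNhd H ∅) :
    Tendsto s l (𝓝 (Sum.inr H)) := by
  refine (hasBasis_nhds_inr H).tendsto_right_iff.2 fun F hF => ?_
  have havoid : ∀ᶠ k in l, s k ∉ Sum.inl '' F := hs (hF.2.image _).compl_mem_cofinite
  filter_upwards [hH, havoid] with k hk hkF
  rcases hk with hk | ⟨a, ⟨haH, -⟩, hk⟩
  · exact .inl hk
  · exact .inr ⟨a, ⟨haH, fun haF => hkF ⟨a, haF, hk⟩⟩, hk⟩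

/-- The letters of a set `S` of symbols lying in no blurred set `H` with `H̃ ∈ S`, so that
`W_α` is the set of uncovered letters of `F_X(α)`. -/
def uncoveredLetters (S : Set (Symb A V)) : Set A :=
  Sum.inl ⁻¹' S \ ⋃ H ∈ (Sum.inr ⁻¹' S : Set {H : Set A // H ∈ V}), H.1

theorem mem_uncoveredLetters_or_mem_blurNhd {S : Set (Symb A V)} {b : Symb A V} (hb : b ∈ S) :
    b ∈ Sum.inl '' uncoveredLetters S ∨
      ∃ H ∈ (Sum.inr ⁻¹' S : Set {H : Set A // H ∈ V}), b ∈ blurNhd H ∅ := by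
  rcases b with a | H
  · by_cases ha : a ∈ ⋃ H ∈ (Sum.inr ⁻¹' S : Set {H : Set A // H ∈ V}), H.1
    · obtain ⟨H, hH, haH⟩ := mem_iUnion₂.1 ha
      exact .inr ⟨H, hH, inl_mem_blurNhd.2 ⟨haH, notMem_empty a⟩⟩
    · exact .inl (mem_image_of_mem _ ⟨hb, ha⟩)
  · exact .inr ⟨H, hb, inr_mem_blurNhd.2 rfl⟩

theorem not_accPt_inl (a : A) (T : Set (Symb A V)) : ¬ AccPt (Sum.inl a) (𝓟 T) := by
  intro h
  obtain ⟨b, ⟨hb, -⟩, hne⟩ := accPt_iff_nhds.1 h {Sum.inl a} (by simp [nhds_inl])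
  exact hne hb

theorem exists_letter_mem_of_accPt_inr {H : {H : Set A // H ∈ V}} {T : Set (Symb A V)}
    (h : AccPt (Sum.inr H) (𝓟 T)) : ∃ a ∈ H.1, Sum.inl a ∈ T := by
  have hH : blurNhd H ∅ ∈ 𝓝 (Sum.inr H : Symb A V) :=
    (hasBasis_nhds_inr H).mem_of_mem ⟨empty_subset _, finite_empty⟩
  obtain ⟨b, ⟨rfl | ⟨a, ha, rfl⟩, hbT⟩, hne⟩ := accPt_iff_nhds.1 h _ hH
  · exact absurd rfl hne
  · exact ⟨a, ha.1, hbT⟩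

theorem exists_blur_of_infinite_subset {S T : Set (Symb A V)} (hS : IsSeqCompact S) (hTS : T ⊆ S)
    (hT : T.Infinite) : ∃ H, Sum.inr H ∈ S ∧ ∃ a ∈ H.1, Sum.inl a ∈ T := by
  obtain ⟨a | H, hbS, hacc⟩ := hS.isCountablyCompact.exists_accPt_of_infinite hTS hT
  · exact absurd hacc (not_accPt_inl a T)
  · exact ⟨H, hbS, exists_letter_mem_of_accPt_inr hacc⟩

theorem finite_preimage_inr_of_isSeqCompact {S : Set (Symb A V)} (hS : IsSeqCompact S) :
    (Sum.inr ⁻¹' S : Set {H : Set A // H ∈ V}).Finite := by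
  by_contra hinf
  obtain ⟨_, -, _, -, _, -, h⟩ := exists_blur_of_infinite_subset hS
    (image_preimage_subset Sum.inr S) (Infinite.image Sum.inr_injective.injOn hinf)
  exact Sum.inr_ne_inl h

theorem finite_uncoveredLetters_of_isSeqCompact {S : Set (Symb A V)} (hS : IsSeqCompact S) :
    (uncoveredLetters S).Finite := by
  by_contra hinf
  obtain ⟨H, hHS, a, haH, haT⟩ := exists_blur_of_infinite_subset hS
    (image_subset_iff.2 fun _ ha => ha.1) (Infinite.image Sum.inl_injective.injOn hinf)
  exact ((Sum.inl_injective.mem_set_image).1 haT).2 (mem_biUnion hHS haH)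

theorem isSeqCompact_of_finite {S : Set (Symb A V)}
    (hblur : (Sum.inr ⁻¹' S : Set {H : Set A // H ∈ V}).Finite)
    (hletters : (uncoveredLetters S).Finite) : IsSeqCompact S := by
  intro s hs
  by_cases hrec : ∃ b, ∃ᶠ k in atTop, s k = b
  · obtain ⟨b, hb⟩ := hrec
    obtain ⟨φ, hφ, hsφ⟩ := extraction_of_frequently_atTop hb
    exact ⟨b, hsφ 0 ▸ hs _, φ, hφ, tendsto_const_nhds.congr fun k => (hsφ k).symm⟩
  · have hcof : Tendsto s atTop cofinite :=
      le_cofinite_iff_eventually_ne.2 fun b => not_frequently.1 fun hb => hrec ⟨b, hb⟩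
    have hcover : ∀ᶠ k in atTop, ∃ H ∈ Sum.inr ⁻¹' S, s k ∈ blurNhd H ∅ :=
      (hcof.eventually (hletters.image Sum.inl).eventually_cofinite_notMem).mono fun k hk =>
        (mem_uncoveredLetters_or_mem_blurNhd (hs k)).resolve_left hk
    obtain ⟨H, hHS, hfreq⟩ := (frequently_exists_finite hblur).1 hcover.frequently
    obtain ⟨φ, hφ, hsφ⟩ := extraction_of_frequently_atTop hfreq
    exact ⟨Sum.inr H, hHS, φ, hφ, tendsto_nhds_inr_of_cofinite
      (hcof.comp hφ.tendsto_atTop) (.of_forall hsφ)⟩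

theorem isSeqCompact_iff_finite {S : Set (Symb A V)} :
    IsSeqCompact S ↔
      (Sum.inr ⁻¹' S : Set {H : Set A // H ∈ V}).Finite ∧ (uncoveredLetters S).Finite :=
  ⟨fun hS => ⟨finite_preimage_inr_of_isSeqCompact hS, finite_uncoveredLetters_of_isSeqCompact hS⟩,
    fun hS => isSeqCompact_of_finite hS.1 hS.2⟩

end SymbolTopology

section Cylinders

variable {A : Type*} {V : Set (Set A)}

theorem mem_Z_iff {α : List A} {x : FullBlur A V} :
    x ∈ Z A V α ↔ ∀ (i : ℕ) (h : i < α.length), x.1 i = Sum.inl α[i] :=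
  ⟨fun hx i h => hx ⟨i, h⟩, fun hx i => hx i i.2⟩

theorem mem_Z_nil (x : FullBlur A V) : x ∈ Z A V [] := fun i => i.elim0

theorem mem_Z_append_singleton {α : List A} {a : A} {x : FullBlur A V} :
    x ∈ Z A V (α ++ [a]) ↔ x ∈ Z A V α ∧ x.1 α.length = Sum.inl a := by
  simp only [mem_Z_iff, List.length_append, List.length_singleton]
  refine ⟨fun hx => ⟨fun i hi => ?_, ?_⟩, fun hx i hi => ?_⟩
  · simpa [List.getElem_append_left hi] using hx i (by omega)
  · simpa using hx α.length (by omega)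
  · obtain hi | rfl := Nat.lt_succ_iff_lt_or_eq.1 hi
    · simpa [List.getElem_append_left hi] using hx.1 i hi
    · simpa using hx.2

theorem mem_Z_map_range {a : ℕ → A} {n : ℕ} {x : FullBlur A V} :
    x ∈ Z A V ((List.range n).map a) ↔ ∀ i < n, x.1 i = Sum.inl (a i) := by
  simp [mem_Z_iff]

theorem ZH_eq_inter_preimage (α : List A) (H : {H : Set A // H ∈ V}) (F : Set A) :
    ZH A V α H F = Z A V α ∩ (fun x => x.1 α.length) ⁻¹' blurNhd H F := by
  ext x
  simp only [ZH, Z, blurNhd, mem_ofPred_eq, mem_inter_iff, mem_preimage, mem_insert_iff, mem_image,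
    eq_comm]

theorem wordBlur_mem_Z (α : List A) (H : {H : Set A // H ∈ V}) : wordBlur α H ∈ Z A V α :=
  fun i => dif_pos i.2

theorem wordBlur_apply_length (α : List A) (H : {H : Set A // H ∈ V}) :
    (wordBlur α H).1 α.length = Sum.inr H :=
  dif_neg (lt_irrefl _)

theorem inLangS_map_inl_iff {X : Set (FullBlur A V)} {α : List A} :
    InLangS X (α.map Sum.inl) ↔ (X ∩ Z A V α).Nonempty := by
  refine exists_congr fun x => and_congr_right fun _ => ?_
  simp [mem_Z_iff, Fin.forall_iff]

theorem folS_map_inl_eq_image (X : Set (FullBlur A V)) (α : List A) :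
    FolS X (α.map Sum.inl) = (fun x => x.1 α.length) '' (X ∩ Z A V α) := by
  ext b
  refine exists_congr fun x => ?_
  rw [mem_inter_iff, and_assoc, mem_Z_iff, Fin.forall_iff]
  refine and_congr_right fun _ => ⟨fun hx => ⟨fun i hi => ?_, ?_⟩, fun hx i hi => ?_⟩
  · simpa [List.getElem_append, hi] using hx i (by simp; omega)
  · simpa using hx α.length (by simp)
  · simp only [List.length_append, List.length_map, List.length_singleton] at hi
    obtain hi | rfl := Nat.lt_succ_iff_lt_or_eq.1 hi
    · simpa [List.getElem_append, hi] using hx.1 i hi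
    · simpa using hx.2

end Cylinders

section ShiftTopology

attribute [local instance] symbTopology tau

section Convergence

variable {A : Type*} {V : Set (Set A)} {ι : Type*} {l : Filter ι} {y : ι → FullBlur A V}
  {x : FullBlur A V}

theorem tendsto_apply_length {α : List A} (hx : x ∈ Z A V α) (hy : Tendsto y l (𝓝 x)) :
    Tendsto (fun k => (y k).1 α.length) l (𝓝 (x.1 α.length)) := by
  have hcyl := TopologicalSpace.tendsto_nhds_generateFrom_iff.1 hy
  rcases hb : x.1 α.length with a | H
  · rw [nhds_inl, tendsto_pure]
    filter_upwards [hcyl _ (.inl ⟨α ++ [a], rfl⟩) (mem_Z_append_singleton.2 ⟨hx, hb⟩)] with k hk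
    exact (mem_Z_append_singleton.1 hk).2
  · refine (hasBasis_nhds_inr H).tendsto_right_iff.2 fun F hF => ?_
    have hxF : x ∈ ZH A V α H F := ⟨hx, .inl hb⟩
    filter_upwards [hcyl _ (.inr ⟨α, H, F, hF.1, hF.2, rfl⟩) hxF] with k hk
    rw [mem_preimage, ZH_eq_inter_preimage] at hk
    exact hk.2

theorem tendsto_nhds_iff_tendsto_apply_length :
    Tendsto y l (𝓝 x) ↔
      ∀ α, x ∈ Z A V α → Tendsto (fun k => (y k).1 α.length) l (𝓝 (x.1 α.length)) := by
  refine ⟨fun hy α hx => tendsto_apply_length hx hy, fun h => ?_⟩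
  have hZ (α : List A) (hx : x ∈ Z A V α) : ∀ᶠ k in l, y k ∈ Z A V α := by
    induction α using List.reverseRecOn with
    | nil => exact .of_forall fun k => mem_Z_nil _
    | append_singleton α a ih =>
      obtain ⟨hx, ha⟩ := mem_Z_append_singleton.1 hx
      have hya := h α hx
      rw [ha, nhds_inl, tendsto_pure] at hya
      filter_upwards [ih hx, hya] with k hk hka
      exact mem_Z_append_singleton.2 ⟨hk, hka⟩
  refine TopologicalSpace.tendsto_nhds_generateFrom_iff.2 ?_
  rintro _ (⟨α, rfl⟩ | ⟨α, H, F, -, hF, rfl⟩) hx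
  · exact hZ α hx
  · rw [ZH_eq_inter_preimage] at hx ⊢
    exact (hZ α hx.1).and (h α hx.1 ((isOpen_blurNhd H hF).mem_nhds hx.2))

theorem tendsto_nhds_of_apply_length_eq_inr {α : List A} {H : {H : Set A // H ∈ V}}
    (hx : x ∈ Z A V α) (hxH : x.1 α.length = Sum.inr H) (hy : ∀ᶠ k in l, y k ∈ Z A V α)
    (hyH : Tendsto (fun k => (y k).1 α.length) l (𝓝 (Sum.inr H))) : Tendsto y l (𝓝 x) := by
  refine tendsto_nhds_iff_tendsto_apply_length.2 fun β hβ => ?_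
  rcases lt_trichotomy β.length α.length with hlt | heq | hgt
  · exact tendsto_nhds_of_eventually_eq (hy.mono fun k hk => (hk ⟨_, hlt⟩).trans (hx ⟨_, hlt⟩).symm)
  · rwa [heq, hxH]
  · exact absurd (hxH.symm.trans (hβ ⟨_, hgt⟩)) Sum.inr_ne_inl

theorem tendsto_nhds_embed {a : ℕ → A} (h : ∀ n, ∀ᶠ k in l, (y k).1 n = Sum.inl (a n)) :
    Tendsto y l (𝓝 (embed A V a)) :=
  tendsto_nhds_iff_tendsto_apply_length.2 fun α _ => tendsto_nhds_of_eventually_eq (h α.length)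

theorem continuousOn_apply_length (α : List A) :
    ContinuousOn (fun x : FullBlur A V => x.1 α.length) (Z A V α) :=
  fun _ hx => (tendsto_apply_length hx tendsto_id).mono_left nhdsWithin_le_nhds

theorem isClosed_Z (α : List A) : IsClosed (Z A V α) := by
  induction α using List.reverseRecOn with
  | nil => simpa only [eq_univ_of_forall mem_Z_nil] using isClosed_univ
  | append_singleton α a ih =>
    have hZ : Z A V (α ++ [a]) = Z A V α ∩ (fun x => x.1 α.length) ⁻¹' {Sum.inl a} :=
      ext fun x => mem_Z_append_singleton
    rw [hZ]
    exact (continuousOn_apply_length α).preimage_isClosed_of_isClosed ih (isClosed_singleton_inl a)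

end Convergence

section SequentialCompactness

variable {A : Type*} {V : Set (Set A)} {X : Set (FullBlur A V)}

theorem isSeqCompact_folS (hX : IsSeqCompact X) (α : List A) :
    IsSeqCompact (FolS X (α.map Sum.inl)) := by
  rw [folS_map_inl_eq_image]
  intro s hs
  choose y hy hys using hs
  obtain ⟨x, hxX, φ, hφ, hlim⟩ := hX fun k => (hy k).1
  have hxZ : x ∈ Z A V α := (isClosed_Z α).mem_of_tendsto hlim (.of_forall fun k => (hy _).2)
  refine ⟨_, mem_image_of_mem _ ⟨hxX, hxZ⟩, φ, hφ, ?_⟩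
  exact (tendsto_apply_length hxZ hlim).congr fun k => hys (φ k)

theorem exists_frequently_append_or_tendsto_wordBlur {y : ℕ → FullBlur A V} (hy : ∀ k, y k ∈ X)
    {α : List A} (hα : ∃ᶠ k in atTop, y k ∈ Z A V α)
    (hX : IsSeqCompact (FolS X (α.map Sum.inl))) :
    (∃ a, ∃ᶠ k in atTop, y k ∈ Z A V (α ++ [a])) ∨
      ∃ H, ∃ φ : ℕ → ℕ, StrictMono φ ∧ Tendsto (y ∘ φ) atTop (𝓝 (wordBlur α H)) := by
  obtain ⟨ψ, hψ, hyψ⟩ := extraction_of_frequently_atTop hα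
  have hfol (k : ℕ) : (y (ψ k)).1 α.length ∈ FolS X (α.map Sum.inl) := by
    rw [folS_map_inl_eq_image]
    exact mem_image_of_mem _ ⟨hy _, hyψ k⟩
  obtain ⟨a | H, -, θ, hθ, hlim⟩ := hX hfol
  · rw [nhds_inl, tendsto_pure] at hlim
    refine .inl ⟨a, (hψ.comp hθ).tendsto_atTop.frequently (hlim.mono fun k hk => ?_).frequently⟩
    exact mem_Z_append_singleton.2 ⟨hyψ _, hk⟩
  · exact .inr ⟨H, ψ ∘ θ, hψ.comp hθ, tendsto_nhds_of_apply_length_eq_inr (wordBlur_mem_Z α H)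
      (wordBlur_apply_length α H) (.of_forall fun k => hyψ _) hlim⟩

theorem exists_tendsto_subseq_of_isSeqCompact_folS
    (hX : ∀ α : List A, InLangS X (α.map Sum.inl) → IsSeqCompact (FolS X (α.map Sum.inl)))
    {y : ℕ → FullBlur A V} (hy : ∀ k, y k ∈ X) :
    ∃ x, ∃ φ : ℕ → ℕ, StrictMono φ ∧ Tendsto (y ∘ φ) atTop (𝓝 x) := by
  by_cases hblur : ∃ α H, ∃ φ : ℕ → ℕ, StrictMono φ ∧ Tendsto (y ∘ φ) atTop (𝓝 (wordBlur α H))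
  · obtain ⟨α, H, hlim⟩ := hblur
    exact ⟨wordBlur α H, hlim⟩
  have happend (α : List A) (hα : ∃ᶠ k in atTop, y k ∈ Z A V α) :
      ∃ a, ∃ᶠ k in atTop, y k ∈ Z A V (α ++ [a]) := by
    obtain ⟨k, hk⟩ := hα.exists
    have hlang : InLangS X (α.map Sum.inl) := inLangS_map_inl_iff.2 ⟨y k, hy k, hk⟩
    exact (exists_frequently_append_or_tendsto_wordBlur hy hα (hX α hlang)).resolve_right
      fun h => hblur ⟨α, h⟩
  obtain ⟨a, ha⟩ := exists_seq_forall_map_range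
    (Frequently.of_forall fun k => mem_Z_nil (y k)) happend
  obtain ⟨φ, hφ, hyφ⟩ := extraction_forall_of_frequently ha
  refine ⟨embed A V a, φ, hφ, tendsto_nhds_embed fun n => ?_⟩
  filter_upwards [eventually_gt_atTop n] with k hk
  exact mem_Z_map_range.1 (hyφ k) n hk

theorem isSeqCompact_of_isSeqCompact_folS (hclosed : IsSeqClosed X)
    (hX : ∀ α : List A, InLangS X (α.map Sum.inl) → IsSeqCompact (FolS X (α.map Sum.inl))) :
    IsSeqCompact X := by
  intro y hy
  obtain ⟨x, φ, hφ, hlim⟩ := exists_tendsto_subseq_of_isSeqCompact_folS hX hy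
  exact ⟨x, hclosed (fun k => hy (φ k)) hlim, φ, hφ, hlim⟩

end SequentialCompactness

end ShiftTopology

theorem seqCompact_iff_finite_follower_general {A : Type*} (V : Set (Set A))
    (X : Set (FullBlur A V)) :
    (@IsSeqCompact _ (tau A V) X →
      ∀ α : List A, InLangS X (α.map Sum.inl) →
        (Valpha V X α).Finite ∧ (Walpha V X α).Finite) ∧
    (@IsSeqClosed _ (tau A V) X →
      (∀ α : List A, InLangS X (α.map Sum.inl) →
        (Valpha V X α).Finite ∧ (Walpha V X α).Finite) →
      @IsSeqCompact _ (tau A V) X) :=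
  ⟨fun hX α _ => isSeqCompact_iff_finite.1 (isSeqCompact_folS hX α), fun hclosed hfin =>
    isSeqCompact_of_isSeqCompact_folS hclosed fun α hα => isSeqCompact_iff_finite.2 (hfin α hα)⟩

/-- If `X ⊆ Σ` is sequentially compact then for every word
`α ∈ B(X)` over `A` the sets `V_α` and `W_α` are finite; conversely, if `X` is
closed and all the sets `V_α`, `W_α` are finite, then `X` is sequentially compact. -/
theorem seqCompact_iff_finite_follower {A : Type*} (V : Set (Set A))
    (hV : IsBlurFamily V) (X : Set (FullBlur A V)) :
    (@IsSeqCompact _ (tau A V) X →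
      ∀ α : List A, InLangS X (α.map Sum.inl) →
        (Valpha V X α).Finite ∧ (Walpha V X α).Finite) ∧
    (@IsClosed _ (tau A V) X →
      (∀ α : List A, InLangS X (α.map Sum.inl) →
        (Valpha V X α).Finite ∧ (Walpha V X α).Finite) →
      @IsSeqCompact _ (tau A V) X) := by
  obtain ⟨hfinite, hcompact⟩ := seqCompact_iff_finite_follower_general V X
  exact ⟨hfinite, fun hclosed => hcompact (@IsClosed.isSeqClosed _ (tau A V) X hclosed)⟩

end BlurPaper
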